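/- Let F : ℝ → ℝ satisfy Assumption 1.2 with parameters κ ∈ (0,1/4) and ε : ℕ → ℝ. Then the normalised Hermite coefficients of F decay faster than any inverse power: for every k ∈ ℕ, m^k · ĉ_m(F) → 0 as m → ∞. -/

import Mathlib

open MeasureTheory ProbabilityTheory Real Filter

/-- The standard Gaussian measure `π₁` on `ℝ`. -/
noncomputable def stdGaussian : Measure ℝ := gaussianReal 0 1

/-- The `m`-th probabilists' Hermite polynomial `He_m`, evaluated at `x`. -/
noncomputable def He (m : ℕ) (x : ℝ) : ℝ := Polynomial.aeval x (Polynomial.hermite m)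

/-- The normalised Hermite coefficients `ĉ_m(F)`. -/
noncomputable def hermiteCoeff (F : ℝ → ℝ) (m : ℕ) : ℝ :=
  (Real.sqrt (Nat.factorial m))⁻¹ * ∫ x, F x * He m x ∂stdGaussian

/-!
Gaussian integration by parts gives `ĉ_{n+1}(F) = ĉ_n(F') / √(n+1)`, so `2k` derivatives gain a
factor `1 / √((n+1)⋯(n+2k)) ≤ (n+1)^{-k}`. What remains is a Hermite coefficient of the `2k`-th
derivative, which is bounded by its `L²(π₁)` norm because the `He_n / √n!` are unit vectors. Growth
at most `exp (κ y²)` with `κ < 1/4` is what puts every derivative into `L²(π₁)`.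
-/

open scoped NNReal ENNReal

theorem abs_integral_mul_le_sqrt_mul_sqrt {α : Type*} {m : MeasurableSpace α} {ν : Measure α}
    {f g : α → ℝ} (hf : MemLp f 2 ν) (hg : MemLp g 2 ν) :
    |∫ x, f x * g x ∂ν| ≤ √(∫ x, f x ^ 2 ∂ν) * √(∫ x, g x ^ 2 ∂ν) := by
  have holder := integral_mul_norm_le_Lp_mul_Lq (μ := ν) (f := f) (g := g) HolderConjugate.two_two
    (by simpa using hf) (by simpa using hg)
  simp only [rpow_two, norm_eq_abs, sq_abs, ← sqrt_eq_rpow] at holder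
  calc |∫ x, f x * g x ∂ν| ≤ ∫ x, |f x * g x| ∂ν := abs_integral_le_integral_abs
    _ = ∫ x, |f x| * |g x| ∂ν := by simp only [abs_mul]
    _ ≤ _ := holder

section Gaussian

variable {μ : ℝ} {v : ℝ≥0}

theorem integrable_gaussianReal_iff {E : Type*} [NormedAddCommGroup E] [NormedSpace ℝ E]
    {f : ℝ → E} (hv : v ≠ 0) :
    Integrable f (gaussianReal μ v) ↔ Integrable fun x => gaussianPDFReal μ v x • f x := by
  rw [gaussianReal_of_var_ne_zero _ hv, integrable_withDensity_iff_integrable_smul'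
    (measurable_gaussianPDF μ v) (ae_of_all _ fun _ => gaussianPDF_lt_top)]
  simp only [toReal_gaussianPDF]

theorem hasDerivAt_gaussianPDFReal (x : ℝ) :
    HasDerivAt (gaussianPDFReal μ v) (-((x - μ) / v) * gaussianPDFReal μ v x) x := by
  have exponent : HasDerivAt (fun y => -(y - μ) ^ 2 / (2 * v)) (-((x - μ) / v)) x := by
    refine ((((hasDerivAt_id x).sub_const μ).pow 2).neg.div_const (2 * v : ℝ)).congr_deriv ?_
    simp only [id_eq, Nat.cast_ofNat, Nat.add_one_sub_one, pow_one, mul_one]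
    rw [neg_div, mul_div_mul_left _ _ two_ne_zero]
  refine (exponent.exp.const_mul (√(2 * π * v))⁻¹).congr_deriv ?_
  rw [gaussianPDFReal]
  ring

theorem integral_sub_mul_gaussianReal {f f' : ℝ → ℝ} (hf : ∀ x, HasDerivAt f (f' x) x)
    (hfi : Integrable f (gaussianReal μ v)) (hfi' : Integrable f' (gaussianReal μ v))
    (hxf : Integrable (fun x => (x - μ) * f x) (gaussianReal μ v)) :
    ∫ x, (x - μ) * f x ∂gaussianReal μ v = v * ∫ x, f' x ∂gaussianReal μ v := by
  rcases eq_or_ne v 0 with rfl | hv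
  · simp
  have hv' : (v : ℝ) ≠ 0 := mod_cast hv
  rw [integrable_gaussianReal_iff hv] at hfi hfi' hxf
  simp only [smul_eq_mul] at hfi hfi' hxf
  have parts := integral_mul_deriv_eq_deriv_mul_of_integrable (fun x _ => hf x)
    (fun x _ => hasDerivAt_gaussianPDFReal (μ := μ) (v := v) x)
    ((hxf.const_mul (-(v : ℝ)⁻¹)).congr (ae_of_all _ fun x => by simp only [Pi.mul_apply]; ring))
    (hfi'.congr (ae_of_all _ fun x => mul_comm _ _))
    (hfi.congr (ae_of_all _ fun x => mul_comm _ _))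
  simp only [integral_gaussianReal_eq_integral_smul hv, smul_eq_mul]
  calc ∫ x, gaussianPDFReal μ v x * ((x - μ) * f x)
      = -v * ∫ x, f x * (-((x - μ) / v) * gaussianPDFReal μ v x) := by
        rw [← integral_const_mul]
        congr with x
        field_simp
    _ = v * ∫ x, gaussianPDFReal μ v x * f' x := by
        simp only [parts, mul_comm (gaussianPDFReal μ v _), neg_mul_neg]

theorem memLp_aeval_gaussianReal {R : Type*} [CommSemiring R] [Algebra R ℝ] (P : Polynomial R)
    {p : ℝ≥0∞} (hp : p ≠ ∞) : MemLp (fun x => Polynomial.aeval x P) p (gaussianReal μ v) := by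
  induction P using Polynomial.induction_on generalizing p with
  | C a => simpa only [Polynomial.aeval_C] using memLp_const _
  | add P Q hP hQ => simpa only [map_add] using! (hP hp).add (hQ hp)
  | monomial n a ih =>
    have htwo : 2 * p ≠ ∞ := ENNReal.mul_ne_top (by simp) hp
    have : ENNReal.HolderTriple (2 * p) (2 * p) p := ⟨by
      rw [ENNReal.mul_inv (by simp) (by simp), ← add_mul, ENNReal.inv_two_add_inv_two, one_mul]⟩
    simpa only [pow_succ, ← mul_assoc, map_mul, Polynomial.aeval_X, id_eq] using
      (memLp_id_gaussianReal' (2 * p) htwo).mul' (ih htwo)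

theorem integrable_exp_mul_sq_gaussianReal {c : ℝ} (hc : 2 * c * v < 1) :
    Integrable (fun x => exp (c * (x - μ) ^ 2)) (gaussianReal μ v) := by
  rcases eq_or_ne v 0 with rfl | hv
  · rw [gaussianReal_zero_var]
    exact integrable_dirac enorm_lt_top
  have rate_pos : 0 < (2 * v : ℝ)⁻¹ - c := by
    rw [sub_pos, ← one_div, lt_div_iff₀ (by positivity)]
    linarith
  rw [integrable_gaussianReal_iff hv]
  refine (((integrable_exp_neg_mul_sq rate_pos).comp_sub_right μ).const_mul
    (√(2 * π * v))⁻¹).congr (ae_of_all _ fun x => ?_)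
  simp only [gaussianPDFReal, smul_eq_mul, mul_assoc, ← exp_add]
  ring_nf

theorem memLp_gaussianReal_of_norm_le_exp_sq {E : Type*} [NormedAddCommGroup E] {f : ℝ → E}
    {p : ℝ≥0∞} {κ C : ℝ} (hp : p ≠ ∞) (hκ : 2 * (p.toReal * κ) * v < 1)
    (hf : AEStronglyMeasurable f (gaussianReal μ v))
    (hbound : ∀ x, ‖f x‖ ≤ C * exp (κ * (x - μ) ^ 2)) : MemLp f p (gaussianReal μ v) := by
  rcases eq_or_ne p 0 with rfl | hp₀
  · exact memLp_zero_iff_aestronglyMeasurable.2 hf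
  have hexp : MemLp (fun x => exp (κ * (x - μ) ^ 2)) p (gaussianReal μ v) := by
    rw [← integrable_norm_rpow_iff (by fun_prop) hp₀ hp]
    refine (integrable_exp_mul_sq_gaussianReal hκ).congr (ae_of_all _ fun x => ?_)
    simp only [norm_eq_abs, abs_exp, ← exp_mul]
    ring_nf
  exact hexp.of_le_mul hf (ae_of_all _ fun x => by
    simpa only [norm_eq_abs, abs_exp] using hbound x)

end Gaussian

theorem derivative_hermite_succ (n : ℕ) : Polynomial.derivative (Polynomial.hermite (n + 1)) =
    ((n : Polynomial ℤ) + 1) * Polynomial.hermite n := by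
  induction n with
  | zero => simp
  | succ n ih =>
    rw [Polynomial.hermite_succ (n + 1), ih]
    simp only [Polynomial.derivative_sub, Polynomial.derivative_mul, Polynomial.derivative_X, ih,
      Polynomial.derivative_add, Polynomial.derivative_natCast, Polynomial.derivative_one]
    rw [Polynomial.hermite_succ n]
    push_cast
    ring

theorem hasDerivAt_He (n : ℕ) (x : ℝ) : HasDerivAt (He n) (x * He n x - He (n + 1) x) x := by
  refine (Polynomial.hasDerivAt_aeval (Polynomial.hermite n) x).congr_deriv ?_
  simp [He, Polynomial.hermite_succ]

theorem hasDerivAt_He_succ (n : ℕ) (x : ℝ) : HasDerivAt (He (n + 1)) ((n + 1) * He n x) x := by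
  refine (Polynomial.hasDerivAt_aeval (Polynomial.hermite (n + 1)) x).congr_deriv ?_
  simp only [derivative_hermite_succ, map_mul, map_add, map_natCast, map_one, He]

theorem memLp_He (n : ℕ) : MemLp (He n) 2 (gaussianReal 0 1) :=
  memLp_aeval_gaussianReal (Polynomial.hermite n) (by simp)

theorem integral_mul_He_succ {f f' : ℝ → ℝ} (hf : ∀ x, HasDerivAt f (f' x) x)
    (hfL : MemLp f 2 (gaussianReal 0 1)) (hfL' : MemLp f' 2 (gaussianReal 0 1)) (n : ℕ) :
    ∫ x, f x * He (n + 1) x ∂gaussianReal 0 1 = ∫ x, f' x * He n x ∂gaussianReal 0 1 := by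
  have hxHe : MemLp (fun x => x * He n x) 2 (gaussianReal 0 1) := by
    have hXHe := memLp_aeval_gaussianReal (μ := 0) (v := 1) (p := 2)
      (Polynomial.X * Polynomial.hermite n) (by simp)
    simpa only [map_mul, Polynomial.aeval_X, He] using hXHe
  have hi : Integrable (fun x => f' x * He n x) (gaussianReal 0 1) :=
    hfL'.integrable_mul (memLp_He n)
  have hi_x : Integrable (fun x => f x * (x * He n x)) (gaussianReal 0 1) :=
    hfL.integrable_mul hxHe
  have hi_succ : Integrable (fun x => f x * He (n + 1) x) (gaussianReal 0 1) :=
    hfL.integrable_mul (memLp_He (n + 1))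
  have hi_deriv : Integrable (fun x => f x * (x * He n x - He (n + 1) x)) (gaussianReal 0 1) :=
    hfL.integrable_mul (hxHe.sub (memLp_He (n + 1)))
  have stein := integral_sub_mul_gaussianReal (μ := 0) (v := 1)
    (fun x => (hf x).mul (hasDerivAt_He n x)) (hfL.integrable_mul (memLp_He n)) (hi.add hi_deriv)
    (hi_x.congr (ae_of_all _ fun x => by simp only [Pi.mul_apply]; ring))
  simp only [Pi.mul_apply, mul_sub, sub_zero, NNReal.coe_one, one_mul] at stein
  rw [integral_add hi (by simpa only [mul_sub] using hi_deriv), integral_sub hi_x hi_succ,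
    integral_congr_ae (ae_of_all _ fun x => mul_left_comm x (f x) (He n x))] at stein
  linarith

theorem integral_He_sq (n : ℕ) : ∫ x, He n x ^ 2 ∂gaussianReal 0 1 = n.factorial := by
  induction n with
  | zero => simp [He]
  | succ n ih =>
    simp only [sq] at ih ⊢
    rw [integral_mul_He_succ (hasDerivAt_He_succ n) (memLp_He _) ((memLp_He n).const_mul _)]
    simp only [mul_assoc]
    rw [integral_const_mul, ih, Nat.factorial_succ, Nat.cast_mul, Nat.cast_succ]

section HermiteCoeff

variable {F : ℝ → ℝ}

theorem hermiteCoeff_eq_integral_gaussianReal (F : ℝ → ℝ) (m : ℕ) :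
    hermiteCoeff F m = (√m.factorial)⁻¹ * ∫ x, F x * He m x ∂gaussianReal 0 1 := rfl

theorem abs_hermiteCoeff_le (hF : MemLp F 2 (gaussianReal 0 1)) (m : ℕ) :
    |hermiteCoeff F m| ≤ √(∫ x, F x ^ 2 ∂gaussianReal 0 1) := by
  have hm : 0 < √(m.factorial : ℝ) := by positivity
  rw [hermiteCoeff_eq_integral_gaussianReal, abs_mul, abs_inv, abs_of_pos hm, inv_mul_le_iff₀' hm,
    ← integral_He_sq m]
  exact abs_integral_mul_le_sqrt_mul_sqrt hF (memLp_He m)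

theorem hermiteCoeff_succ (hF : Differentiable ℝ F) (hFL : MemLp F 2 (gaussianReal 0 1))
    (hFL' : MemLp (deriv F) 2 (gaussianReal 0 1)) (n : ℕ) :
    hermiteCoeff F (n + 1) = (√(n + 1))⁻¹ * hermiteCoeff (deriv F) n := by
  simp only [hermiteCoeff_eq_integral_gaussianReal, Nat.factorial_succ, Nat.cast_mul,
    Nat.cast_succ, integral_mul_He_succ (fun x => (hF x).hasDerivAt) hFL hFL' n]
  rw [sqrt_mul (by positivity), mul_inv, mul_assoc]

theorem hermiteCoeff_add {j : ℕ} (hF : ContDiff ℝ j F)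
    (hFL : ∀ i ≤ j, MemLp (iteratedDeriv i F) 2 (gaussianReal 0 1)) (n : ℕ) :
    hermiteCoeff F (n + j) =
      (√((n + 1).ascFactorial j))⁻¹ * hermiteCoeff (iteratedDeriv j F) n := by
  induction j generalizing n with
  | zero => simp
  | succ j ih =>
    have hasc : ((n + 1).ascFactorial (j + 1) : ℝ) = (n + 2).ascFactorial j * (n + 1) := by
      rw [Nat.ascFactorial_succ, ← Nat.succ_ascFactorial]
      push_cast
      ring
    calc hermiteCoeff F (n + (j + 1))
        = hermiteCoeff F (n + 1 + j) := by congr 1; ring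
      _ = (√((n + 2).ascFactorial j))⁻¹ * hermiteCoeff (iteratedDeriv j F) (n + 1) :=
          ih (hF.of_le (by norm_cast; lia)) (fun i hi => hFL i (by lia)) (n + 1)
      _ = (√((n + 2).ascFactorial j))⁻¹ *
            ((√(n + 1))⁻¹ * hermiteCoeff (iteratedDeriv (j + 1) F) n) := by
          rw [iteratedDeriv_succ, hermiteCoeff_succ
            (hF.differentiable_iteratedDeriv j (by norm_cast; lia)) (hFL j (by lia))
            (iteratedDeriv_succ (f := F) ▸ hFL (j + 1) le_rfl)]
      _ = _ := by rw [hasc, sqrt_mul (by positivity), mul_inv, mul_assoc]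

theorem succ_pow_mul_abs_hermiteCoeff_add_le {k : ℕ} (hF : ContDiff ℝ (2 * k : ℕ) F)
    (hFL : ∀ i ≤ 2 * k, MemLp (iteratedDeriv i F) 2 (gaussianReal 0 1)) (n : ℕ) :
    (n + 1 : ℝ) ^ k * |hermiteCoeff F (n + 2 * k)| ≤
      √(∫ x, iteratedDeriv (2 * k) F x ^ 2 ∂gaussianReal 0 1) := by
  have hpow : (n + 1 : ℝ) ^ k ≤ √((n + 1).ascFactorial (2 * k)) := by
    refine le_sqrt_of_sq_le ?_
    rw [← pow_mul, mul_comm k]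
    exact_mod_cast Nat.pow_succ_le_ascFactorial (n + 1) (2 * k)
  have hpos : 0 < √((n + 1).ascFactorial (2 * k) : ℝ) := lt_of_lt_of_le (by positivity) hpow
  calc (n + 1 : ℝ) ^ k * |hermiteCoeff F (n + 2 * k)|
      ≤ √((n + 1).ascFactorial (2 * k)) * |hermiteCoeff F (n + 2 * k)| := by gcongr
    _ = |hermiteCoeff (iteratedDeriv (2 * k) F) n| := by
        rw [hermiteCoeff_add hF hFL, abs_mul, abs_inv, abs_of_pos hpos,
          mul_inv_cancel_left₀ hpos.ne']
    _ ≤ _ := abs_hermiteCoeff_le (hFL _ le_rfl) n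

theorem isBoundedUnder_pow_mul_hermiteCoeff {k : ℕ} (hF : ContDiff ℝ (2 * k : ℕ) F)
    (hFL : ∀ i ≤ 2 * k, MemLp (iteratedDeriv i F) 2 (gaussianReal 0 1)) :
    IsBoundedUnder (· ≤ ·) atTop fun m : ℕ => |(m : ℝ) ^ k * hermiteCoeff F m| := by
  refine isBoundedUnder_of_eventually_le
    (a := (2 * k + 1) ^ k * √(∫ x, iteratedDeriv (2 * k) F x ^ 2 ∂gaussianReal 0 1))
    ((eventually_ge_atTop (2 * k)).mono fun m hm => ?_)
  obtain ⟨n, rfl⟩ := Nat.exists_eq_add_of_le' hm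
  have hle : ((n + 2 * k : ℕ) : ℝ) ≤ (2 * k + 1) * (n + 1) := by
    exact_mod_cast (by nlinarith : n + 2 * k ≤ (2 * k + 1) * (n + 1))
  calc |((n + 2 * k : ℕ) : ℝ) ^ k * hermiteCoeff F (n + 2 * k)|
      = ((n + 2 * k : ℕ) : ℝ) ^ k * |hermiteCoeff F (n + 2 * k)| := by
        rw [abs_mul, abs_of_nonneg (by positivity)]
    _ ≤ ((2 * k + 1) * (n + 1)) ^ k * |hermiteCoeff F (n + 2 * k)| := by gcongr
    _ = (2 * k + 1) ^ k * ((n + 1) ^ k * |hermiteCoeff F (n + 2 * k)|) := by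
        rw [mul_pow, mul_assoc]
    _ ≤ _ := by
        gcongr
        exact succ_pow_mul_abs_hermiteCoeff_add_le hF hFL n

end HermiteCoeff

theorem stmt7_general (F : ℝ → ℝ) (hF : ∀ n : ℕ, ContDiff ℝ n F)
    (hFL : ∀ n : ℕ, MemLp (iteratedDeriv n F) 2 (gaussianReal 0 1)) :
    ∀ k : ℕ, Tendsto (fun m : ℕ => (m : ℝ) ^ k * hermiteCoeff F m) atTop (nhds 0) :=
  (Asymptotics.superpolynomialDecay_iff_abs_isBoundedUnder _ tendsto_natCast_atTop_atTop).2
    fun k => isBoundedUnder_pow_mul_hermiteCoeff (hF (2 * k)) fun i _ => hFL i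

theorem stmt7 (κ : ℝ) (hκ : κ ∈ Set.Ioo (0 : ℝ) (1 / 4)) (ε : ℕ → ℝ)
    (hε : Tendsto (fun n : ℕ => ε n / n) atTop (nhds 0))
    (F : ℝ → ℝ) (hF : ∀ n : ℕ, ContDiff ℝ n F)
    (hbound : ∀ (n : ℕ) (y : ℝ),
      |iteratedDeriv n F y| ≤ Real.exp (Real.exp (ε n)) * Real.exp (κ * y ^ 2)) :
    ∀ k : ℕ, Tendsto (fun m : ℕ => (m : ℝ) ^ k * hermiteCoeff F m) atTop (nhds 0) :=
  stmt7_general F hF fun n => memLp_gaussianReal_of_norm_le_exp_sq (by simp)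
    (by norm_num; linarith [hκ.2]) ((hF n).continuous_iteratedDeriv n le_rfl).aestronglyMeasurable
    fun y => by simpa only [sub_zero, norm_eq_abs] using hbound n y
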